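/- arXiv:0709.3821 — 5 statements merged into one kernel-verified Lean document; each statement's English description precedes it below -/
import Mathlib

section
/- Let m be an odd positive integer and let l be an even integer with 0 ≤ l ≤ m−1. Then for every natural number x, S_{m,l}(2x) = S_{m,l/2}(x) − S_{m,(l+m−1)/2}(x). -/
/-- The Newman sum `S_{m,l}(x) = ∑_{0 ≤ n < x, n ≡ l (mod m)} (-1)^{σ(n)}`,
where `σ(n)` is the sum of the binary digits of `n`. -/
def newmanSum (m l x : ℕ) : ℤ :=
  ∑ n ∈ Finset.range x, if n % m = l then (-1 : ℤ) ^ ((Nat.digits 2 n).sum) else 0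

/-! Among the `n < 2x`, the even ones `2k` satisfy `σ(2k) = σ(k)` and the odd ones `2k + 1` satisfy
`σ(2k + 1) = σ(k) + 1`, with `k < x` in both cases. Since `2` is invertible modulo `m`, each of
the conditions `2k ≡ l` and `2k + 1 ≡ l` confines `k` to a single residue class. -/

theorem sum_range_mul_eq_sum_sum {M : Type*} [AddCommMonoid M] (f : ℕ → M) (b n : ℕ) :
    ∑ i ∈ Finset.range (b * n), f i =
      ∑ i ∈ Finset.range n, ∑ r ∈ Finset.range b, f (b * i + r) := by
  induction n with
  | zero => simp
  | succ n ih => rw [Nat.mul_succ, Finset.sum_range_add, Finset.sum_range_succ, ih]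

theorem sum_digits_base_mul_add {b r : ℕ} (hb : 1 < b) (hr : r < b) (n : ℕ) :
    (Nat.digits b (b * n + r)).sum = (Nat.digits b n).sum + r := by
  by_cases h : r ≠ 0 ∨ n ≠ 0
  · rw [add_comm (b * n), Nat.digits_add b hb r n hr h, List.sum_cons, add_comm]
  · obtain ⟨rfl, rfl⟩ : r = 0 ∧ n = 0 := by simpa using h
    simp

theorem mul_add_mod_eq_iff_of_coprime {m c r a l : ℕ} (hmc : m.Coprime c) (ha : a < m) (hl : l < m)
    (h : c * a + r ≡ l [MOD m]) (n : ℕ) : (c * n + r) % m = l ↔ n % m = a :=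
  calc (c * n + r) % m = l
    _ ↔ c * n + r ≡ l [MOD m] := by rw [Nat.ModEq, Nat.mod_eq_of_lt hl]
    _ ↔ c * n + r ≡ c * a + r [MOD m] := ⟨(·.trans h.symm), (·.trans h)⟩
    _ ↔ n ≡ a [MOD m] :=
      ⟨fun hn ↦ (hn.add_right_cancel' r).cancel_left_of_coprime hmc,
        fun hn ↦ (hn.mul_left c).add_right r⟩
    _ ↔ n % m = a := by rw [Nat.ModEq, Nat.mod_eq_of_lt ha]

theorem stmt_0_general {m l a b : ℕ} (hm : Odd m) (hl : l < m) (ha : a < m) (hb : b < m)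
    (hal : 2 * a ≡ l [MOD m]) (hbl : 2 * b + 1 ≡ l [MOD m]) (x : ℕ) :
    newmanSum m l (2 * x) = newmanSum m a x - newmanSum m b x := by
  have even_iff (n : ℕ) : (2 * n + 0) % m = l ↔ n % m = a :=
    mul_add_mod_eq_iff_of_coprime hm.coprime_two_right ha hl hal n
  have odd_iff (n : ℕ) : (2 * n + 1) % m = l ↔ n % m = b :=
    mul_add_mod_eq_iff_of_coprime hm.coprime_two_right hb hl hbl n
  simp only [newmanSum]
  rw [sum_range_mul_eq_sum_sum, ← Finset.sum_sub_distrib]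
  refine Finset.sum_congr rfl fun n _ ↦ ?_
  rw [Finset.sum_range_succ, Finset.sum_range_one]
  simp only [even_iff, odd_iff, sum_digits_base_mul_add one_lt_two two_pos,
    sum_digits_base_mul_add one_lt_two one_lt_two, pow_add]
  split_ifs <;> ring

theorem stmt_0 (m l : ℕ) (hm : 0 < m) (hmodd : Odd m) (hleven : Even l)
    (hl : l ≤ m - 1) (x : ℕ) :
    newmanSum m l (2 * x) =
      newmanSum m (l / 2) x - newmanSum m ((l + m - 1) / 2) x := by
  have half_even : 2 * (l / 2) = l := Nat.two_mul_div_two_of_even hleven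
  have half_odd : 2 * ((l + m - 1) / 2) + 1 = l + m := by
    have := Nat.two_mul_div_two_add_one_of_odd (hleven.add_odd hmodd)
    omega
  exact stmt_0_general hmodd (by omega) (by omega) (by omega)
    (by rw [half_even]) (by rw [half_odd]; exact Nat.add_modEq_right) x
end

section
/- Let m be an odd positive integer and let l be an odd integer with 0 ≤ l ≤ m−1. Then for every natural number x, S_{m,l}(2x) = −S_{m,(l−1)/2}(x) + S_{m,(l+m)/2}(x). -/
/-!
Split the integers below `2 * x` into `2 * n` and `2 * n + 1` with `n < x`. Appending a binary
digit `0` keeps the sign `(-1)^{σ(n)}` and appending a digit `1` flips it. As `2` is invertible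
modulo the odd number `m`, each of the congruences `2 * n ≡ l` and `2 * n + 1 ≡ l` confines `n` to
a single residue class, namely that of `(l + m) / 2` and of `(l - 1) / 2` when `l` is odd.
-/

theorem sum_range_mul_eq_sum_sum_range {M : Type*} [AddCommMonoid M] (f : ℕ → M) (b x : ℕ) :
    ∑ n ∈ Finset.range (b * x), f n =
      ∑ n ∈ Finset.range x, ∑ r ∈ Finset.range b, f (b * n + r) := by
  induction x with
  | zero => simp
  | succ x ih => rw [Nat.mul_succ, Finset.sum_range_add, ih, Finset.sum_range_succ]

theorem sum_digits_mul_add {b d : ℕ} (hb : 1 < b) (hd : d < b) (n : ℕ) :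
    (Nat.digits b (b * n + d)).sum = (Nat.digits b n).sum + d := by
  by_cases h : d = 0 ∧ n = 0
  · simp [h]
  · rw [add_comm, Nat.digits_add b hb d n hd (by tauto), List.sum_cons, add_comm]

theorem mul_left_modEq_iff_of_coprime {m c : ℕ} (hmc : m.Coprime c) {a b : ℕ} :
    c * a ≡ c * b [MOD m] ↔ a ≡ b [MOD m] :=
  ⟨Nat.ModEq.cancel_left_of_coprime hmc, Nat.ModEq.mul_left c⟩

theorem newmanSum_eq_sum_modEq {m l : ℕ} (hl : l < m) (x : ℕ) :
    newmanSum m l x =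
      ∑ n ∈ Finset.range x, if n ≡ l [MOD m] then (-1) ^ (Nat.digits 2 n).sum else 0 := by
  simp only [newmanSum, Nat.ModEq, Nat.mod_eq_of_lt hl]

theorem newmanSum_two_mul {m l a b : ℕ} (hm : Odd m) (hl : l < m) (ha : a < m) (hb : b < m)
    (hal : 2 * a + 1 ≡ l [MOD m]) (hbl : 2 * b ≡ l [MOD m]) (x : ℕ) :
    newmanSum m l (2 * x) = -newmanSum m a x + newmanSum m b x := by
  have even_modEq (n : ℕ) : 2 * n ≡ l [MOD m] ↔ n ≡ b [MOD m] := by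
    rw [← mul_left_modEq_iff_of_coprime hm.coprime_two_right (a := n)]
    exact ⟨(·.trans hbl.symm), (·.trans hbl)⟩
  have odd_modEq (n : ℕ) : 2 * n + 1 ≡ l [MOD m] ↔ n ≡ a [MOD m] := by
    rw [← mul_left_modEq_iff_of_coprime hm.coprime_two_right (a := n)]
    exact ⟨fun h ↦ (h.trans hal.symm).add_right_cancel' 1, fun h ↦ (h.add_right 1).trans hal⟩
  have even_digits (n : ℕ) : (Nat.digits 2 (2 * n)).sum = (Nat.digits 2 n).sum :=
    sum_digits_mul_add one_lt_two two_pos n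
  have odd_digits (n : ℕ) : (Nat.digits 2 (2 * n + 1)).sum = (Nat.digits 2 n).sum + 1 :=
    sum_digits_mul_add one_lt_two one_lt_two n
  rw [newmanSum_eq_sum_modEq hl, newmanSum_eq_sum_modEq ha, newmanSum_eq_sum_modEq hb,
    sum_range_mul_eq_sum_sum_range, ← Finset.sum_neg_distrib, ← Finset.sum_add_distrib]
  refine Finset.sum_congr rfl fun n _ ↦ ?_
  simp only [Finset.sum_range_succ, Finset.sum_range_zero, zero_add, add_zero,
    even_modEq, odd_modEq, even_digits, odd_digits, pow_succ]
  split_ifs <;> ring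

theorem stmt_1 (m l : ℕ) (hm : 0 < m) (hmodd : Odd m) (hlodd : Odd l)
    (hl : l ≤ m - 1) (x : ℕ) :
    newmanSum m l (2 * x) =
      -newmanSum m ((l - 1) / 2) x + newmanSum m ((l + m) / 2) x := by
  have two_mul_half_pred : 2 * ((l - 1) / 2) + 1 = l := by
    rw [Nat.mul_div_cancel' (Nat.Odd.sub_odd hlodd odd_one).two_dvd,
      Nat.sub_one_add_one hlodd.pos.ne']
  have two_mul_half_add : 2 * ((l + m) / 2) = l + m :=
    Nat.mul_div_cancel' (hlodd.add_odd hmodd).two_dvd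
  refine newmanSum_two_mul hmodd (by omega) (by omega) (by omega) ?_ ?_ x
  · rw [two_mul_half_pred]
  · rw [two_mul_half_add]
    exact Nat.add_modEq_right
end

section
/- For every even natural number n, S_{3,0}(4n) = 3·S_{3,0}(n). -/
/-!
Let `t(k) = (-1)^{σ(k)}` and `F_n(X) = ∑_{k < n} t(k) X^k`. Splitting off the last two binary digits
gives `F_{4n}(X) = (1 - X)(1 - X²) F_n(X⁴)`. Modulo `X³ - 1` we have `X⁴ = X` and
`(1 - X)(1 - X²) = 3 - (1 + X + X²)`, so each residue class modulo `3` satisfies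
`S_{3,l}(4n) = 3 S_{3,l}(n) - F_n(1)`. For even `n` the terms of `F_n(1) = S_{1,0}(n)` cancel in
consecutive pairs.
-/

/-- The Thue–Morse sequence with values `±1`, i.e. the summand `(-1)^{σ(n)}` of the Newman sums. -/
def thueMorseSign (n : ℕ) : ℤ :=
  (-1) ^ (Nat.digits 2 n).sum

lemma thueMorseSign_two_mul (n : ℕ) : thueMorseSign (2 * n) = thueMorseSign n := by
  rcases n.eq_zero_or_pos with rfl | hn
  · rfl
  · simp only [thueMorseSign, Nat.digits_base_mul one_lt_two hn, List.sum_cons, zero_add]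

lemma thueMorseSign_two_mul_add_one (n : ℕ) :
    thueMorseSign (2 * n + 1) = -thueMorseSign n := by
  have digits_eq : Nat.digits 2 (2 * n + 1) = 1 :: Nat.digits 2 n := by
    rw [add_comm, Nat.digits_add 2 one_lt_two 1 n one_lt_two (.inl one_ne_zero)]
  rw [thueMorseSign, digits_eq, List.sum_cons, pow_add, pow_one, neg_one_mul, thueMorseSign]

lemma thueMorseSign_four_mul (n : ℕ) : thueMorseSign (4 * n) = thueMorseSign n := by
  rw [show 4 * n = 2 * (2 * n) by ring, thueMorseSign_two_mul, thueMorseSign_two_mul]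

lemma thueMorseSign_four_mul_add_one (n : ℕ) :
    thueMorseSign (4 * n + 1) = -thueMorseSign n := by
  rw [show 4 * n + 1 = 2 * (2 * n) + 1 by ring, thueMorseSign_two_mul_add_one,
    thueMorseSign_two_mul]

lemma thueMorseSign_four_mul_add_two (n : ℕ) :
    thueMorseSign (4 * n + 2) = -thueMorseSign n := by
  rw [show 4 * n + 2 = 2 * (2 * n + 1) by ring, thueMorseSign_two_mul,
    thueMorseSign_two_mul_add_one]

lemma thueMorseSign_four_mul_add_three (n : ℕ) :
    thueMorseSign (4 * n + 3) = thueMorseSign n := by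
  rw [show 4 * n + 3 = 2 * (2 * n + 1) + 1 by ring, thueMorseSign_two_mul_add_one,
    thueMorseSign_two_mul_add_one, neg_neg]

lemma newmanSum_zero (m l : ℕ) : newmanSum m l 0 = 0 :=
  Finset.sum_range_zero _

lemma newmanSum_succ (m l x : ℕ) :
    newmanSum m l (x + 1) = newmanSum m l x + if x % m = l then thueMorseSign x else 0 :=
  Finset.sum_range_succ _ x

lemma newmanSum_one_zero_succ (x : ℕ) :
    newmanSum 1 0 (x + 1) = newmanSum 1 0 x + thueMorseSign x := by
  rw [newmanSum_succ, if_pos x.mod_one]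

lemma newmanSum_one_zero_two_mul (n : ℕ) : newmanSum 1 0 (2 * n) = 0 := by
  induction n with
  | zero => exact newmanSum_zero 1 0
  | succ n ih =>
    rw [show 2 * (n + 1) = 2 * n + 1 + 1 by ring, newmanSum_one_zero_succ,
      newmanSum_one_zero_succ, ih, thueMorseSign_two_mul, thueMorseSign_two_mul_add_one]
    ring

lemma sum_ite_mod_three_eq {M : Type*} [AddMonoid M] {l : ℕ} (hl : l < 3) (n : ℕ) (a : M) :
    (if n % 3 = l then a else 0) + (if (n + 1) % 3 = l then a else 0) +
      (if (n + 2) % 3 = l then a else 0) = a := by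
  obtain h | h | h : n % 3 = 0 ∨ n % 3 = 1 ∨ n % 3 = 2 := by omega
  all_goals interval_cases l <;> simp [Nat.add_mod, h]

lemma newmanSum_three_four_mul_add_four {l : ℕ} (hl : l < 3) (n : ℕ) :
    newmanSum 3 l (4 * n + 4) =
      newmanSum 3 l (4 * n) + 3 * (if n % 3 = l then thueMorseSign n else 0) - thueMorseSign n := by
  have mod_four_mul : 4 * n % 3 = n % 3 := by omega
  have mod_add_one : (4 * n + 1) % 3 = (n + 1) % 3 := by omega
  have mod_add_two : (4 * n + 2) % 3 = (n + 2) % 3 := by omega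
  have mod_add_three : (4 * n + 3) % 3 = n % 3 := by omega
  have ite_neg_zero (p : Prop) [Decidable p] (a : ℤ) :
      (if p then -a else 0) = -(if p then a else 0) := by
    rw [neg_ite, neg_zero]
  simp only [newmanSum_succ, thueMorseSign_four_mul, thueMorseSign_four_mul_add_one,
    thueMorseSign_four_mul_add_two, thueMorseSign_four_mul_add_three, mod_four_mul, mod_add_one,
    mod_add_two, mod_add_three, ite_neg_zero]
  linarith [sum_ite_mod_three_eq hl n (thueMorseSign n)]

theorem newmanSum_three_four_mul {l : ℕ} (hl : l < 3) (n : ℕ) :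
    newmanSum 3 l (4 * n) = 3 * newmanSum 3 l n - newmanSum 1 0 n := by
  induction n with
  | zero => simp only [mul_zero, newmanSum_zero, sub_zero]
  | succ n ih =>
    rw [mul_add_one, newmanSum_three_four_mul_add_four hl, ih, newmanSum_succ,
      newmanSum_one_zero_succ]
    ring

theorem stmt_4_general {l : ℕ} (hl : l < 3) {n : ℕ} (hn : Even n) :
    newmanSum 3 l (4 * n) = 3 * newmanSum 3 l n := by
  obtain ⟨k, rfl⟩ := hn.exists_two_nsmul
  rw [newmanSum_three_four_mul hl, smul_eq_mul, newmanSum_one_zero_two_mul, sub_zero]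

theorem stmt_4 (n : ℕ) (hn : Even n) :
    newmanSum 3 0 (4 * n) = 3 * newmanSum 3 0 n :=
  stmt_4_general three_pos hn
end

section
/- There exists a constant C > 0 such that for all natural numbers n ≥ 1, |S_{7,0}(n)| ≤ C · n^{ln 7 / ln 64}, i.e. S_{7,0}(n) = O(n^{0.46789...}). -/
/-!
For a root of unity `z`, the twisted sum `T z x = ∑ n < x, (-1) ^ σ(n) * z ^ n` satisfies
`T z (2 * x) = (1 - z) * T (z ^ 2) x`, because appending a binary digit `1` flips the sign. If `p`
is an odd prime and `z ^ p = 1`, then `z ^ (2 ^ (p - 1)) = z`, so iterating `p - 1` times gives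
`T z (2 ^ (p - 1) * x) = (∏ i < p - 1, (1 - z ^ (2 ^ i))) * T z x`. Suppose that `2` and `-1`
generate `(ℤ/p)ˣ` and `z ≠ 1`. Since `|1 - ζ|` is invariant under conjugation, the modulus of the
factor does not change when `z` is replaced by another primitive `p`-th root of unity; averaging
over all of them shows that it is `∏ ζ, |1 - ζ| = Φ_p(1) = p`. Hence `T z x = O(x ^ α)` with
`(2 ^ (p - 1)) ^ α = p`, and the Newman sum is an average of such twisted sums by Fourier inversion
on `ℤ/p`. For `p = 7` the powers of `2` are the squares and `-1` is not a square.
-/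

open Finset

theorem le_mul_rpow_logb_of_le_mul_div_add {f : ℕ → ℝ} {b : ℕ} {a c : ℝ} (hb : 1 < b)
    (ha : 1 < a) (hc : 0 ≤ c) (hf₀ : 0 ≤ f 0) (hf : ∀ n, f n ≤ a * f (n / b) + c)
    {n : ℕ} (hn : 1 ≤ n) :
    f n ≤ a * (f 0 + c / (a - 1)) * (n : ℝ) ^ Real.logb b a := by
  have hb' : (1 : ℝ) < b := by exact_mod_cast hb
  have hα : 0 ≤ Real.logb b a := Real.logb_nonneg hb' ha.le
  set d := c / (a - 1) with hd
  have hd₀ : 0 ≤ d := div_nonneg hc (by linarith)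
  -- `-d` is the fixed point of `x ↦ a * x + c`.
  have hf' (m : ℕ) : f m + d ≤ a * (f (m / b) + d) := by
    have : a * d = c + d := by rw [hd]; field_simp [sub_ne_zero.mpr ha.ne']; ring
    linarith [hf m]
  have hC : 0 ≤ a * (f 0 + d) := by positivity
  suffices f n + d ≤ a * (f 0 + d) * (n : ℝ) ^ Real.logb b a by linarith
  induction n using Nat.strong_induction_on with
  | _ n ih =>
    refine (hf' n).trans ?_
    rcases lt_or_ge n b with hnb | hbn
    · rw [Nat.div_eq_of_lt hnb]
      exact le_mul_of_one_le_right hC (Real.one_le_rpow (by exact_mod_cast hn) hα)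
    · have hrec := ih (n / b) (Nat.div_lt_self hn hb) (Nat.div_pos hbn (by lia))
      calc a * (f (n / b) + d)
          ≤ a * (a * (f 0 + d) * ((n / b : ℕ) : ℝ) ^ Real.logb b a) := by gcongr
        _ = a * (f 0 + d) * ((b : ℝ) ^ Real.logb b a * ((n / b : ℕ) : ℝ) ^ Real.logb b a) := by
          rw [Real.rpow_logb (by linarith) hb'.ne' (by linarith)]
          ring
        _ = a * (f 0 + d) * ((b * (n / b) : ℕ) : ℝ) ^ Real.logb b a := by
          rw [← Real.mul_rpow (by positivity) (by positivity), Nat.cast_mul]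
        _ ≤ a * (f 0 + d) * (n : ℝ) ^ Real.logb b a := by
          gcongr
          exact Nat.mul_div_le n b

theorem prod_range_add_one_of_periodic {M : Type*} [CommMonoid M] {f : ℕ → M} {N : ℕ}
    (hf : Function.Periodic f N) : ∏ i ∈ range N, f (i + 1) = ∏ i ∈ range N, f i := by
  cases N with
  | zero => simp
  | succ N => rw [prod_range_succ, prod_range_succ', ← hf 0, zero_add]

theorem prod_range_card_pow_mul_pow_mul {G M : Type*} [Group G] [Fintype G] [CommMonoid M]
    (F : G → M) (g a : G) (k : ℕ) :
    ∏ i ∈ range (Fintype.card G), F (g ^ i * (g ^ k * a)) =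
      ∏ i ∈ range (Fintype.card G), F (g ^ i * a) := by
  induction k with
  | zero => simp
  | succ k ih =>
    rw [← ih, ← prod_range_add_one_of_periodic (f := fun i => F (g ^ i * (g ^ k * a)))]
    · simp only [pow_succ' g k, pow_succ, mul_assoc]
    · intro i
      simp only [pow_add, pow_card_eq_one, mul_one]

theorem prod_range_card_pow_mul_eq_prod {G : Type*} [CommGroup G] [Fintype G] {F : G → ℝ}
    (hF : ∀ u, 0 ≤ F u) {g : G} (hg : ∀ u, ∃ k : ℕ, ∀ v, F (u * v) = F (g ^ k * v)) (a : G) :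
    ∏ i ∈ range (Fintype.card G), F (g ^ i * a) = ∏ u, F u := by
  set P : G → ℝ := fun u => ∏ i ∈ range (Fintype.card G), F (g ^ i * u)
  -- Since `P` is constant, multiplying it over the whole group gives a power of either side.
  have hP_const (u : G) : P u = P a := by
    obtain ⟨k, hk⟩ := hg (u * a⁻¹)
    calc P u = ∏ i ∈ range (Fintype.card G), F (g ^ i * (g ^ k * a)) := by
          refine prod_congr rfl fun i _ => ?_
          rw [mul_left_comm, ← hk, mul_left_comm, inv_mul_cancel_right]
      _ = P a := prod_range_card_pow_mul_pow_mul F g a k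
  have hpow : P a ^ Fintype.card G = (∏ u, F u) ^ Fintype.card G := by
    calc P a ^ Fintype.card G = ∏ u, P u := by simp [hP_const]
      _ = ∏ i ∈ range (Fintype.card G), ∏ u, F (g ^ i * u) := prod_comm
      _ = ∏ i ∈ range (Fintype.card G), ∏ u, F u :=
        prod_congr rfl fun i _ => Equiv.prod_comp (Equiv.mulLeft (g ^ i)) F
      _ = (∏ u, F u) ^ Fintype.card G := by simp
  exact (pow_left_inj₀ (prod_nonneg fun _ _ => hF _) (prod_nonneg fun _ _ => hF _)
    Fintype.card_ne_zero).mp hpow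

section StandardCharacter

open ZMod Polynomial

theorem isPrimitiveRoot_stdAddChar_unit {n : ℕ} [NeZero n] (u : (ZMod n)ˣ) :
    IsPrimitiveRoot (stdAddChar (u : ZMod n)) n := by
  have hone : IsPrimitiveRoot (stdAddChar (1 : ZMod n)) n := by
    have hexp := stdAddChar_coe (N := n) 1
    simp only [Int.cast_one, mul_one] at hexp
    exact hexp ▸ Complex.isPrimitiveRoot_exp n (NeZero.ne n)
  have hu : stdAddChar (u : ZMod n) = stdAddChar (1 : ZMod n) ^ (u : ZMod n).val := by
    rw [← AddChar.map_nsmul_eq_pow, nsmul_one, natCast_zmod_val]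
  exact hu ▸ hone.pow_of_coprime _ (val_coe_unit_coprime u)

theorem stdAddChar_pow_two_pow {n : ℕ} [NeZero n] (a : ZMod n) (i : ℕ) :
    stdAddChar a ^ 2 ^ i = stdAddChar (2 ^ i * a) := by
  rw [← AddChar.map_nsmul_eq_pow, nsmul_eq_mul, Nat.cast_pow, Nat.cast_ofNat]

theorem prod_units_X_sub_C_stdAddChar (n : ℕ) [NeZero n] :
    ∏ u : (ZMod n)ˣ, (X - C (stdAddChar (u : ZMod n))) = cyclotomic n ℂ := by
  have hinj : Set.InjOn (fun u : (ZMod n)ˣ => stdAddChar (u : ZMod n)) (univ : Finset (ZMod n)ˣ) :=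
    (injective_stdAddChar.comp Units.val_injective).injOn
  have himage : univ.image (fun u : (ZMod n)ˣ => stdAddChar (u : ZMod n)) = primitiveRoots n ℂ := by
    refine eq_of_subset_of_card_le (fun z hz => ?_) ?_
    · obtain ⟨u, -, rfl⟩ := mem_image.mp hz
      exact (mem_primitiveRoots (NeZero.pos n)).mpr (isPrimitiveRoot_stdAddChar_unit u)
    · rw [card_image_of_injOn hinj, card_univ, card_units_eq_totient, Complex.card_primitiveRoots]
  rw [cyclotomic_eq_prod_X_sub_primitiveRoots (isPrimitiveRoot_stdAddChar_unit (1 : (ZMod n)ˣ)),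
    ← himage, prod_image hinj]

variable {p : ℕ} [Fact p.Prime]

theorem prod_units_norm_one_sub_stdAddChar :
    ∏ u : (ZMod p)ˣ, ‖1 - stdAddChar (u : ZMod p)‖ = p := by
  have h := congrArg (eval 1) (prod_units_X_sub_C_stdAddChar p)
  rw [eval_one_cyclotomic_prime, eval_prod] at h
  simp only [eval_sub, eval_X, eval_C] at h
  rw [← norm_prod, h, Complex.norm_natCast]

theorem norm_one_sub_stdAddChar_neg {n : ℕ} [NeZero n] (x : ZMod n) :
    ‖1 - stdAddChar (-x)‖ = ‖1 - stdAddChar x‖ := by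
  rw [AddChar.map_neg_eq_conj, ← Complex.norm_conj, map_sub, map_one, Complex.conj_conj]

theorem prod_range_norm_one_sub_stdAddChar_pow_mul {g : (ZMod p)ˣ}
    (hg : ∀ u : (ZMod p)ˣ, ∃ k : ℕ, u = g ^ k ∨ u = -g ^ k) (a : (ZMod p)ˣ) :
    ∏ i ∈ range (p - 1), ‖1 - stdAddChar (g ^ i * a : ZMod p)‖ = p := by
  have htranslate (u : (ZMod p)ˣ) : ∃ k : ℕ, ∀ v : (ZMod p)ˣ,
      ‖1 - stdAddChar ((u * v : (ZMod p)ˣ) : ZMod p)‖ =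
        ‖1 - stdAddChar ((g ^ k * v : (ZMod p)ˣ) : ZMod p)‖ := by
    obtain ⟨k, rfl | rfl⟩ := hg u
    · exact ⟨k, fun _ => rfl⟩
    · refine ⟨k, fun v => ?_⟩
      rw [neg_mul, Units.val_neg, norm_one_sub_stdAddChar_neg]
  have h := prod_range_card_pow_mul_eq_prod
    (F := fun u : (ZMod p)ˣ => ‖1 - stdAddChar (u : ZMod p)‖) (fun _ => norm_nonneg _) htranslate a
  rw [card_units, prod_units_norm_one_sub_stdAddChar] at h
  exact_mod_cast h

end StandardCharacter

section TwistedSum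

variable {R : Type*} [CommRing R]

/-- The sum `∑ n < x, (-1) ^ σ(n) * z ^ n`, where `σ(n)` is the sum of the binary digits of `n`:
the truncated generating function of the Thue–Morse signs, evaluated at `z`. -/
def thueMorseSum (z : R) (x : ℕ) : R :=
  ∑ n ∈ range x, (-1) ^ (Nat.digits 2 n).sum * z ^ n

theorem sum_digits_two_mul (n : ℕ) : (Nat.digits 2 (2 * n)).sum = (Nat.digits 2 n).sum := by
  rcases n.eq_zero_or_pos with rfl | hn
  · rfl
  · simp [Nat.digits_base_mul one_lt_two hn]

theorem sum_digits_two_mul_add_one (n : ℕ) :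
    (Nat.digits 2 (2 * n + 1)).sum = (Nat.digits 2 n).sum + 1 := by
  rw [add_comm, Nat.digits_add 2 one_lt_two 1 n one_lt_two (Or.inl one_ne_zero), List.sum_cons,
    add_comm]

theorem thueMorseSum_two_mul (z : R) (x : ℕ) :
    thueMorseSum z (2 * x) = (1 - z) * thueMorseSum (z ^ 2) x := by
  induction x with
  | zero => simp [thueMorseSum]
  | succ x ih =>
    rw [thueMorseSum] at ih
    rw [thueMorseSum, mul_add_one, sum_range_succ, sum_range_succ, ih, thueMorseSum, thueMorseSum,
      sum_range_succ, sum_digits_two_mul, sum_digits_two_mul_add_one]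
    ring

theorem thueMorseSum_two_pow_mul (z : R) (k x : ℕ) :
    thueMorseSum z (2 ^ k * x) =
      (∏ i ∈ range k, (1 - z ^ 2 ^ i)) * thueMorseSum (z ^ 2 ^ k) x := by
  induction k generalizing z with
  | zero => simp
  | succ k ih =>
    rw [pow_succ', mul_assoc, thueMorseSum_two_mul, ih, prod_range_succ']
    simp only [← pow_mul, ← pow_succ', pow_zero, pow_one]
    ring

variable {𝕜 : Type*} [NormedField 𝕜]

theorem norm_thueMorseSum_add_le {z : 𝕜} (hz : ‖z‖ ≤ 1) (x r : ℕ) :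
    ‖thueMorseSum z (x + r)‖ ≤ ‖thueMorseSum z x‖ + r := by
  rw [thueMorseSum, sum_range_add]
  refine (norm_add_le _ _).trans (add_le_add_right ?_ _)
  refine (norm_sum_le_of_le _ fun i _ => ?_).trans (by simp : ∑ i ∈ range r, (1 : ℝ) ≤ r)
  simpa using pow_le_one₀ (norm_nonneg z) hz

theorem norm_thueMorseSum_le {z : 𝕜} (hz : ‖z‖ ≤ 1) {k : ℕ} (hk : k ≠ 0) (hzk : z ^ 2 ^ k = z)
    {a : ℝ} (ha : 1 < a) (hprod : ∏ i ∈ range k, ‖1 - z ^ 2 ^ i‖ ≤ a) {n : ℕ} (hn : 1 ≤ n) :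
    ‖thueMorseSum z n‖ ≤ a * (2 ^ k / (a - 1)) * (n : ℝ) ^ Real.logb (2 ^ k) a := by
  have hrec (n : ℕ) : ‖thueMorseSum z n‖ ≤ a * ‖thueMorseSum z (n / 2 ^ k)‖ + 2 ^ k :=
    calc ‖thueMorseSum z n‖
        = ‖thueMorseSum z (2 ^ k * (n / 2 ^ k) + n % 2 ^ k)‖ := by rw [Nat.div_add_mod]
      _ ≤ ‖thueMorseSum z (2 ^ k * (n / 2 ^ k))‖ + (n % 2 ^ k : ℕ) :=
        norm_thueMorseSum_add_le hz _ _
      _ = (∏ i ∈ range k, ‖1 - z ^ 2 ^ i‖) * ‖thueMorseSum z (n / 2 ^ k)‖ +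
          (n % 2 ^ k : ℕ) := by
        rw [thueMorseSum_two_pow_mul, hzk, norm_mul, norm_prod]
      _ ≤ a * ‖thueMorseSum z (n / 2 ^ k)‖ + 2 ^ k := by
        gcongr
        exact_mod_cast (Nat.mod_lt n (Nat.two_pow_pos k)).le
  have h := le_mul_rpow_logb_of_le_mul_div_add (f := fun n => ‖thueMorseSum z n‖) (c := 2 ^ k)
    (Nat.one_lt_two_pow hk) ha (by positivity) (norm_nonneg _) hrec hn
  simpa [thueMorseSum] using h

end TwistedSum

section NewmanSum

open ZMod

theorem natCast_mul_newmanSum {m l : ℕ} [NeZero m] (hl : l < m) (x : ℕ) :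
    (m : ℂ) * newmanSum m l x =
      ∑ a : ZMod m, stdAddChar (-(a * (l : ZMod m))) * thueMorseSum (stdAddChar a) x := by
  have hindicator (n : ℕ) : ∑ a : ZMod m, stdAddChar (a * (n - l : ZMod m)) =
      if n % m = l then (m : ℂ) else 0 := by
    have hiff : (n - l : ZMod m) = 0 ↔ n % m = l := by
      rw [sub_eq_zero, natCast_eq_natCast_iff', Nat.mod_eq_of_lt hl]
    simp [AddChar.sum_mulShift _ (isPrimitive_stdAddChar m), hiff]
  have hchar (a : ZMod m) (n : ℕ) :
      stdAddChar (a * (n - l : ZMod m)) = stdAddChar (-(a * (l : ZMod m))) * stdAddChar a ^ n := by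
    rw [← AddChar.map_nsmul_eq_pow, ← AddChar.map_add_eq_mul, nsmul_eq_mul]
    ring_nf
  calc (m : ℂ) * newmanSum m l x
      = ∑ n ∈ range x, (-1) ^ (Nat.digits 2 n).sum *
          ∑ a : ZMod m, stdAddChar (a * (n - l : ZMod m)) := by
        simp [newmanSum, hindicator, mul_sum, mul_comm]
    _ = ∑ a : ZMod m, stdAddChar (-(a * (l : ZMod m))) * thueMorseSum (stdAddChar a) x := by
        simp only [hchar, thueMorseSum, mul_sum]
        rw [sum_comm]
        simp only [mul_left_comm]

theorem abs_newmanSum_le {m l : ℕ} [NeZero m] (hl : l < m) {x : ℕ} {B : ℝ}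
    (hB : ∀ a : ZMod m, ‖thueMorseSum (stdAddChar a) x‖ ≤ B) :
    |(newmanSum m l x : ℝ)| ≤ B := by
  have hm : (0 : ℝ) < m := by exact_mod_cast NeZero.pos m
  refine le_of_mul_le_mul_left ?_ hm
  calc (m : ℝ) * |(newmanSum m l x : ℝ)|
      = ‖∑ a : ZMod m, stdAddChar (-(a * (l : ZMod m))) * thueMorseSum (stdAddChar a) x‖ := by
        rw [← natCast_mul_newmanSum hl, norm_mul, Complex.norm_natCast, Complex.norm_intCast]
    _ ≤ ∑ _a : ZMod m, B := norm_sum_le_of_le _ fun a _ => by simpa [AddChar.norm_apply] using hB a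
    _ = m * B := by simp

variable {p : ℕ} [Fact p.Prime]

theorem prod_range_norm_one_sub_stdAddChar_pow_two_pow_le (hp : p ≠ 2)
    (hgen : ∀ a : ZMod p, a ≠ 0 → ∃ k : ℕ, a = 2 ^ k ∨ a = -2 ^ k) (a : ZMod p) :
    ∏ i ∈ range (p - 1), ‖1 - stdAddChar a ^ 2 ^ i‖ ≤ p := by
  rcases eq_or_ne a 0 with rfl | ha
  · have hmem : 0 ∈ range (p - 1) :=
      mem_range.mpr (Nat.sub_pos_of_lt (Fact.out : p.Prime).one_lt)
    rw [prod_eq_zero hmem (by simp)]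
    positivity
  have htwo : (2 : ZMod p) ≠ 0 := Ring.two_ne_zero ((ringChar_zmod_n p).trans_ne hp)
  have hunits (u : (ZMod p)ˣ) :
      ∃ k : ℕ, u = Units.mk0 2 htwo ^ k ∨ u = -Units.mk0 2 htwo ^ k := by
    simpa [Units.ext_iff] using hgen u u.ne_zero
  have h := prod_range_norm_one_sub_stdAddChar_pow_mul hunits (Units.mk0 a ha)
  simp only [Units.val_mk0] at h
  simpa only [stdAddChar_pow_two_pow] using h.le

theorem stmt_11_general {l : ℕ} (hp : p ≠ 2)
    (hgen : ∀ a : ZMod p, a ≠ 0 → ∃ k : ℕ, a = 2 ^ k ∨ a = -2 ^ k) (hl : l < p) :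
    ∃ C : ℝ, 0 < C ∧ ∀ n : ℕ, 1 ≤ n →
      |(newmanSum p l n : ℝ)| ≤ C * (n : ℝ) ^ Real.logb (2 ^ (p - 1)) p := by
  have hp₁ : (1 : ℝ) < p := by exact_mod_cast (Fact.out : p.Prime).one_lt
  refine ⟨p * (2 ^ (p - 1) / (p - 1)), by have := sub_pos.mpr hp₁; positivity, fun n hn => ?_⟩
  refine abs_newmanSum_le hl fun a => norm_thueMorseSum_le (AddChar.norm_apply _ _).le
    (Nat.sub_ne_zero_of_lt (Fact.out : p.Prime).one_lt) ?_ hp₁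
    (prod_range_norm_one_sub_stdAddChar_pow_two_pow_le hp hgen a) hn
  rw [stdAddChar_pow_two_pow, pow_card_sub_one_eq_one
    (Ring.two_ne_zero ((ringChar_zmod_n p).trans_ne hp)), one_mul]

end NewmanSum

theorem stmt_11 :
    ∃ C : ℝ, 0 < C ∧ ∀ n : ℕ, 1 ≤ n →
      (|newmanSum 7 0 n| : ℝ) ≤ C * (n : ℝ) ^ (Real.log 7 / Real.log 64) := by
  have hgen : ∀ a : ZMod 7, a ≠ 0 → ∃ k < 3, a = 2 ^ k ∨ a = -2 ^ k := by decide
  have : Fact (Nat.Prime 7) := ⟨by norm_num⟩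
  have h := stmt_11_general (p := 7) (l := 0) (by norm_num)
    (fun a ha => (hgen a ha).imp fun _ => And.right) (by norm_num)
  have h64 : (2 : ℝ) ^ (7 - 1) = 64 := by norm_num
  simpa only [Real.logb, h64, Nat.cast_ofNat] using h
end

section
/- There exists a constant C > 0 such that for all natural numbers n ≥ 1, |S_{5,0,4}(n)| ≤ C · n^{ln(5 + 2√5) / ln 16}, i.e. S_{5,0,4}(n) = O(n^{0.81092...}). -/
/-- The generalized Newman sum in base 4:
`S_{m,l,4}(x) = ∑_{0 ≤ n < x, n ≡ l (mod m)} (-1)^{σ₄(n)}`,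
where `σ₄(n)` is the sum of the base-4 digits of `n`. -/
def newmanSum4 (m l x : ℕ) : ℤ :=
  ∑ n ∈ Finset.range x, if n % m = l then (-1 : ℤ) ^ ((Nat.digits 4 n).sum) else 0

/-!
Expanding the congruence condition in additive characters turns `newmanSum4 m l` into a weighted
average of the sums `∑_{n < x} (-1) ^ σ₄(n) * z ^ n` over the `m`-th roots of unity `z`. Splitting
off the last digit shows that passing from `q` to `4 * q` multiplies such a sum by the factor
`1 - z + z ^ 2 - z ^ 3` and replaces `z` by `z ^ 4`, which is again an `m`-th root of unity. If
`L > 1` bounds the modulus of all these factors, the sums are therefore `O(x ^ logb 4 L)`. For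
`m = 5` the square modulus of the factor at a primitive root `z` is `5 ± 2 √5`, because `z + z⁻¹` is
a root of `X ^ 2 + X - 1`.
-/

open Finset Real

section TwistedDigitSum

/-- The sum of `y ^ s(n) * z ^ n` over `n < x`, where `s(n)` is the sum of the digits of `n` in
base `b`. It plays the role of the generating polynomial of the digit-sum weights `y ^ s(n)`,
evaluated at a root of unity `z` in order to detect `n` modulo the order of `z`. -/
def twistedDigitSum {R : Type*} [CommSemiring R] (b : ℕ) (y z : R) (x : ℕ) : R :=
  ∑ n ∈ range x, y ^ (b.digits n).sum * z ^ n

theorem digits_sum_mul_add {b r : ℕ} (hr : r < b) (q : ℕ) :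
    (b.digits (b * q + r)).sum = r + (b.digits q).sum := by
  obtain rfl | hb : b = 1 ∨ 1 < b := by lia
  · simp [Nat.lt_one_iff.mp hr]
  by_cases h : r ≠ 0 ∨ q ≠ 0
  · rw [add_comm, Nat.digits_add b hb r q hr h, List.sum_cons]
  · obtain ⟨rfl, rfl⟩ : r = 0 ∧ q = 0 := by simpa using h
    simp

theorem twistedDigitSum_base_mul {R : Type*} [CommSemiring R] (b : ℕ) (y z : R) (q : ℕ) :
    twistedDigitSum b y z (b * q) =
      (∑ r ∈ range b, (y * z) ^ r) * twistedDigitSum b y (z ^ b) q := by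
  induction q with
  | zero => simp [twistedDigitSum]
  | succ q ih =>
    have last_block : ∑ r ∈ range b, y ^ (b.digits (b * q + r)).sum * z ^ (b * q + r) =
        (∑ r ∈ range b, (y * z) ^ r) * (y ^ (b.digits q).sum * (z ^ b) ^ q) := by
      rw [sum_mul]
      refine sum_congr rfl fun r hr ↦ ?_
      rw [digits_sum_mul_add (mem_range.mp hr) q]
      ring
    simp only [twistedDigitSum] at ih ⊢
    rw [mul_add_one, sum_range_add, ih, last_block, sum_range_succ, mul_add]

variable {R : Type*} [NormedCommRing R] [NormOneClass R] {y z : R}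

theorem norm_twistedDigitSum_add_le (b : ℕ) (hy : ‖y‖ ≤ 1) (hz : ‖z‖ ≤ 1) (x r : ℕ) :
    ‖twistedDigitSum b y z (x + r)‖ ≤ ‖twistedDigitSum b y z x‖ + r := by
  have norm_term_le (n : ℕ) : ‖y ^ (b.digits n).sum * z ^ n‖ ≤ 1 :=
    calc ‖y ^ (b.digits n).sum * z ^ n‖
      _ ≤ ‖y‖ ^ (b.digits n).sum * ‖z‖ ^ n :=
        norm_mul_le_of_le (norm_pow_le y _) (norm_pow_le z n)
      _ ≤ 1 := mul_le_one₀ (pow_le_one₀ (norm_nonneg y) hy) (by positivity)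
        (pow_le_one₀ (norm_nonneg z) hz)
  rw [twistedDigitSum, sum_range_add]
  refine norm_add_le_of_le le_rfl ((norm_sum_le_of_le _ fun i _ ↦ norm_term_le (x + i)).trans ?_)
  simp

theorem norm_twistedDigitSum_le_div {b : ℕ} (hb : b ≠ 0) (hy : ‖y‖ ≤ 1) (hz : ‖z‖ ≤ 1) (n : ℕ) :
    ‖twistedDigitSum b y z n‖ ≤
      ‖∑ r ∈ range b, (y * z) ^ r‖ * ‖twistedDigitSum b y (z ^ b) (n / b)‖ + b :=
  calc ‖twistedDigitSum b y z n‖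
    _ = ‖twistedDigitSum b y z (b * (n / b) + n % b)‖ := by rw [Nat.div_add_mod]
    _ ≤ ‖twistedDigitSum b y z (b * (n / b))‖ + (n % b : ℕ) :=
      norm_twistedDigitSum_add_le b hy hz _ _
    _ ≤ ‖∑ r ∈ range b, (y * z) ^ r‖ * ‖twistedDigitSum b y (z ^ b) (n / b)‖ + b := by
      rw [twistedDigitSum_base_mul]
      gcongr
      · exact norm_mul_le _ _
      · exact (Nat.mod_lt n hb.bot_lt).le

end TwistedDigitSum

theorem le_mul_rpow_logb_of_le_mul_div_add_s13 {ι : Type*} {F : ι → ℕ → ℝ} {σ : ι → ι} {b : ℕ}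
    {L c : ℝ} (hb : 1 < b) (hL : 1 < L) (hzero : ∀ i, F i 0 = 0)
    (hstep : ∀ i n, F i n ≤ L * F (σ i) (n / b) + c) (i : ι) (n : ℕ) :
    F i n ≤ L * c / (L - 1) * (n : ℝ) ^ logb b L := by
  set α := logb b L
  have one_lt_cast : (1 : ℝ) < b := mod_cast hb
  have hα : 0 < α := logb_pos one_lt_cast hL
  have hbα : (b : ℝ) ^ α = L := rpow_logb (by linarith) one_lt_cast.ne' (by linarith)
  have hc : 0 ≤ c := by simpa [hzero] using hstep i 0
  have sub_one_pos : 0 < L - 1 := sub_pos.mpr hL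
  -- Subtracting the fixed point `c / (L - 1)` of `t ↦ L * t - c` absorbs the additive error `c`.
  have strong (n : ℕ) (hn : n ≠ 0) (i : ι) :
      F i n ≤ L * c / (L - 1) * (n : ℝ) ^ α - c / (L - 1) := by
    induction n using Nat.strong_induction_on generalizing i with
    | _ n ih =>
      rcases eq_or_ne (n / b) 0 with hq | hq
      · have one_le : (1 : ℝ) ≤ (n : ℝ) ^ α :=
          one_le_rpow (mod_cast Nat.one_le_iff_ne_zero.mpr hn) hα.le
        calc F i n
          _ ≤ c := by simpa [hq, hzero] using hstep i n
          _ = L * c / (L - 1) * 1 - c / (L - 1) := by field_simp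
          _ ≤ L * c / (L - 1) * (n : ℝ) ^ α - c / (L - 1) := by gcongr
      · have scale : L * ((n / b : ℕ) : ℝ) ^ α ≤ (n : ℝ) ^ α := by
          rw [← hbα, ← mul_rpow (by positivity) (by positivity)]
          gcongr
          exact mod_cast Nat.mul_div_le n b
        calc F i n
          _ ≤ L * F (σ i) (n / b) + c := hstep i n
          _ ≤ L * (L * c / (L - 1) * ((n / b : ℕ) : ℝ) ^ α - c / (L - 1)) + c := by
            gcongr
            exact ih _ (Nat.div_lt_self (by lia) hb) hq _
          _ = L * c / (L - 1) * (L * ((n / b : ℕ) : ℝ) ^ α) - c / (L - 1) := by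
            field_simp
            ring
          _ ≤ L * c / (L - 1) * (n : ℝ) ^ α - c / (L - 1) := by gcongr
  rcases eq_or_ne n 0 with rfl | hn
  · simp [hzero, hα.ne']
  · exact (strong n hn i).trans (sub_le_self _ (by positivity))

theorem norm_twistedDigitSum_le_mul_rpow {b m : ℕ} (hb : 1 < b) (hm : m ≠ 0) {y : ℂ}
    (hy : ‖y‖ ≤ 1) {L : ℝ} (hL : 1 < L)
    (hfactor : ∀ z : ℂ, z ^ m = 1 → ‖∑ r ∈ range b, (y * z) ^ r‖ ≤ L) {z : ℂ} (hz : z ^ m = 1)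
    (n : ℕ) :
    ‖twistedDigitSum b y z n‖ ≤ L * b / (L - 1) * (n : ℝ) ^ logb b L := by
  let σ (w : {w : ℂ // w ^ m = 1}) : {w : ℂ // w ^ m = 1} :=
    ⟨w.1 ^ b, by rw [pow_right_comm, w.2, one_pow]⟩
  refine le_mul_rpow_logb_of_le_mul_div_add_s13 (σ := σ)
    (F := fun w n ↦ ‖twistedDigitSum b y w.1 n‖) hb hL (fun w ↦ by simp [twistedDigitSum])
    (fun w n ↦ ?_) ⟨z, hz⟩ n
  have hw : ‖w.1‖ ≤ 1 := (Complex.norm_eq_one_of_pow_eq_one w.2 hm).le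
  refine (norm_twistedDigitSum_le_div (by lia) hy hw n).trans ?_
  gcongr
  exact hfactor w.1 w.2

section NewmanSum

variable {m l : ℕ}

theorem natCast_mul_newmanSum4_eq_sum_stdAddChar [NeZero m] (hl : l < m) (x : ℕ) :
    (m : ℂ) * newmanSum4 m l x =
      ∑ k : ZMod m, ZMod.stdAddChar (k * -(l : ZMod m)) *
        twistedDigitSum 4 (-1) (ZMod.stdAddChar k) x := by
  have orthogonality (n : ℕ) :
      ∑ k : ZMod m, ZMod.stdAddChar (k * -(l : ZMod m)) * ZMod.stdAddChar k ^ n =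
        if n % m = l then (m : ℂ) else 0 := by
    have mod_eq_iff : n % m = l ↔ (n - l : ZMod m) = 0 := by
      rw [sub_eq_zero, ZMod.natCast_eq_natCast_iff', Nat.mod_eq_of_lt hl]
    calc ∑ k : ZMod m, ZMod.stdAddChar (k * -(l : ZMod m)) * ZMod.stdAddChar k ^ n
      _ = ∑ k : ZMod m, ZMod.stdAddChar (k * (n - l : ZMod m)) := by
        refine sum_congr rfl fun k _ ↦ ?_
        rw [← AddChar.map_nsmul_eq_pow, ← AddChar.map_add_eq_mul, nsmul_eq_mul]
        ring_nf
      _ = if n % m = l then (m : ℂ) else 0 := by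
        rw [AddChar.sum_mulShift _ (ZMod.isPrimitive_stdAddChar m), if_congr mod_eq_iff rfl rfl,
          ZMod.card]
        norm_cast
  simp only [newmanSum4, twistedDigitSum, Int.cast_sum, mul_sum]
  rw [sum_comm]
  refine sum_congr rfl fun n _ ↦ ?_
  simp only [mul_left_comm _ ((-1 : ℂ) ^ _)]
  rw [← mul_sum, orthogonality]
  split_ifs <;> simp [mul_comm]

theorem abs_newmanSum4_le_mul_rpow (hl : l < m) {L : ℝ} (hL : 1 < L)
    (hfactor : ∀ z : ℂ, z ^ m = 1 → ‖∑ r ∈ range 4, (-z) ^ r‖ ≤ L) (n : ℕ) :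
    (|newmanSum4 m l n| : ℝ) ≤ L * 4 / (L - 1) * (n : ℝ) ^ logb 4 L := by
  have : NeZero m := ⟨by lia⟩
  have hm : (0 : ℝ) < m := mod_cast (NeZero.pos m)
  have norm_summand_le (k : ZMod m) :
      ‖ZMod.stdAddChar (k * -(l : ZMod m)) * twistedDigitSum 4 (-1) (ZMod.stdAddChar k : ℂ) n‖ ≤
        L * 4 / (L - 1) * (n : ℝ) ^ logb 4 L := by
    have hk : (ZMod.stdAddChar k : ℂ) ^ m = 1 := by
      rw [← AddChar.map_nsmul_eq_pow, nsmul_eq_mul, ZMod.natCast_self, zero_mul,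
        AddChar.map_zero_eq_one]
    rw [norm_mul, AddChar.norm_apply, one_mul]
    exact norm_twistedDigitSum_le_mul_rpow (b := 4) (by norm_num) (NeZero.ne m) (by simp) hL
      (by simpa only [neg_one_mul] using hfactor) hk n
  refine le_of_mul_le_mul_left ?_ hm
  calc (m : ℝ) * |(newmanSum4 m l n : ℝ)|
    _ = ‖(m : ℂ) * newmanSum4 m l n‖ := by simp
    _ ≤ ∑ _k : ZMod m, L * 4 / (L - 1) * (n : ℝ) ^ logb 4 L := by
      rw [natCast_mul_newmanSum4_eq_sum_stdAddChar hl]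
      exact norm_sum_le_of_le _ fun k _ ↦ norm_summand_le k
    _ = m * (L * 4 / (L - 1) * (n : ℝ) ^ logb 4 L) := by simp [ZMod.card]

end NewmanSum

section FifthRoots

variable {z : ℂ}

theorem sq_norm_sq_sum_neg_pow_sub_five (hz : z ^ 5 = 1) (hne : z ≠ 1) :
    (‖∑ r ∈ range 4, (-z) ^ r‖ ^ 2 - 5) ^ 2 = 20 := by
  have conj_eq : (starRingEnd ℂ) z = z ^ 4 := by
    rw [← Complex.inv_eq_conj (Complex.norm_eq_one_of_pow_eq_one hz (by norm_num))]
    exact inv_eq_of_mul_eq_one_right (by linear_combination hz)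
  have cyclotomic : 1 + z + z ^ 2 + z ^ 3 + z ^ 4 = 0 :=
    (mul_eq_zero.mp (by linear_combination hz :
      (z - 1) * (1 + z + z ^ 2 + z ^ 3 + z ^ 4) = 0)).resolve_left (sub_ne_zero.mpr hne)
  have gaussian_period : (z + z ^ 4) ^ 2 + (z + z ^ 4) - 1 = 0 := by
    linear_combination cyclotomic + (2 + z ^ 3) * hz
  have pow_four_sq : (z ^ 4) ^ 2 = z ^ 3 := by linear_combination z ^ 3 * hz
  have pow_four_cube : (z ^ 4) ^ 3 = z ^ 2 := by linear_combination (z ^ 7 + z ^ 2) * hz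
  have sum_eq : ∑ r ∈ range 4, (-z) ^ r = 1 - z + z ^ 2 - z ^ 3 := by
    simp only [sum_range_succ, sum_range_zero]
    ring
  have conj_sum_eq : (starRingEnd ℂ) (∑ r ∈ range 4, (-z) ^ r) = 1 - z ^ 4 + z ^ 3 - z ^ 2 := by
    simp only [sum_eq, map_add, map_sub, map_one, map_pow, conj_eq, pow_four_sq, pow_four_cube]
  have norm_sq_eq : (‖∑ r ∈ range 4, (-z) ^ r‖ : ℂ) ^ 2 = 3 - 4 * (z + z ^ 4) := by
    rw [← Complex.mul_conj', conj_sum_eq, sum_eq]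
    linear_combination cyclotomic + (3 - 2 * z + z ^ 2) * hz
  have : ((‖∑ r ∈ range 4, (-z) ^ r‖ : ℂ) ^ 2 - 5) ^ 2 = 20 := by
    rw [norm_sq_eq]
    linear_combination 16 * gaussian_period
  exact_mod_cast this

theorem norm_sum_neg_pow_le_of_pow_five_eq_one (hz : z ^ 5 = 1) :
    ‖∑ r ∈ range 4, (-z) ^ r‖ ≤ √(5 + 2 * √5) := by
  rcases eq_or_ne z 1 with rfl | hne
  · have sum_eq_zero : ∑ r ∈ range 4, (-1 : ℂ) ^ r = 0 := by norm_num [sum_range_succ]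
    rw [sum_eq_zero, norm_zero]
    positivity
  · apply le_sqrt_of_sq_le
    have h : (‖∑ r ∈ range 4, (-z) ^ r‖ ^ 2 - 5) ^ 2 ≤ (2 * √5) ^ 2 := by
      rw [sq_norm_sq_sum_neg_pow_sub_five hz hne, mul_pow, sq_sqrt (by norm_num)]
      norm_num
    linarith [le_of_sq_le_sq h (by positivity)]

end FifthRoots

theorem stmt_13_general :
    ∃ C : ℝ, 0 < C ∧ ∀ l < 5, ∀ n : ℕ,
      (|newmanSum4 5 l n| : ℝ) ≤ C * (n : ℝ) ^ (log (5 + 2 * √5) / log 16) := by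
  have one_lt : 1 < √(5 + 2 * √5) := lt_sqrt_of_sq_lt (by nlinarith [sqrt_nonneg 5])
  have exponent_eq : log (5 + 2 * √5) / log 16 = logb 4 √(5 + 2 * √5) := by
    rw [logb, log_sqrt (by positivity), show (16 : ℝ) = 4 ^ 2 by norm_num, log_pow, div_div]
    norm_cast
  refine ⟨√(5 + 2 * √5) * 4 / (√(5 + 2 * √5) - 1),
    div_pos (by positivity) (sub_pos.mpr one_lt), fun l hl n ↦ ?_⟩
  rw [exponent_eq]
  exact abs_newmanSum4_le_mul_rpow hl one_lt (fun _ ↦ norm_sum_neg_pow_le_of_pow_five_eq_one) n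

theorem stmt_13 :
    ∃ C : ℝ, 0 < C ∧ ∀ n : ℕ, 1 ≤ n →
      (|newmanSum4 5 0 n| : ℝ) ≤
        C * (n : ℝ) ^ (Real.log (5 + 2 * Real.sqrt 5) / Real.log 16) :=
  stmt_13_general.imp fun _ ⟨hC, bound⟩ ↦ ⟨hC, fun n _ ↦ bound 0 (by norm_num) n⟩
end
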